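/- Lifted optimality inequality for formulation (nPCR1): fix h ∈ {1,…,H}, let y : J → {0,1} satisfy Σ_{j∈J} y_j = p^h ≥ 1, let z ∈ ℝ satisfy z ≥ d_{ij} − Σ_{j' : d_{ij'} < d_{ij}} (d_{ij} − d_{ij'}) y_{j'} for all i ∈ I and j ∈ J, and let LB ≥ 0 satisfy LB ≤ d*(p^h) = min{ d(S) : S ⊆ J, |S| = p^h }. Then for all i ∈ I and j ∈ J it holds that z ≥ max{LB, d_{ij}} − Σ_{j' : d_{ij'} < d_{ij}} ( max{LB, d_{ij}} − max{LB, d_{ij'}} ) y_{j'}. -/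

import Mathlib

attribute [local instance] Classical.propDecidable

/-- Covering radius: `d(S) = max_{i ∈ I} min_{j ∈ S} d i j` (junk value 0 for `S = ∅`). -/
noncomputable def covRad {I J : Type} [Fintype I] [Fintype J] [Nonempty I]
    (d : I → J → ℝ) (S : Finset J) : ℝ :=
  if h : S.Nonempty then
    Finset.univ.sup' Finset.univ_nonempty (fun i => S.inf' h (fun j => d i j))
  else 0

/-- The p-center optimal value `d*(p) = min { d(S) : S ⊆ J, |S| = p }`. -/
noncomputable def pCenterOpt {I J : Type} [Fintype I] [Fintype J] [Nonempty I]
    (d : I → J → ℝ) (p : ℕ) : ℝ :=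
  sInf { v : ℝ | ∃ S : Finset J, S.card = p ∧ v = covRad d S }

/-!
The formulation forces `z` above the distance from each customer to its nearest open facility: in
the constraint written for that facility, every summand belongs to a closed one. Hence `z` is at
least the covering radius of the open facilities, and so at least `LB`. The lifted right-hand side,
in turn, never exceeds `max LB (d i j₀)` for an open facility `j₀`: the summand of `j₀` pays for
the difference, and lifting keeps all summands nonnegative because `max LB` is monotone.
-/

section WeightedSums

variable {J α R : Type*} [LinearOrder α] {s : Finset J} {c : J → α} {y : J → R}

theorem sum_filter_lt_mul_eq_zero [NonUnitalNonAssocSemiring R] {a : α}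
    (hmin : ∀ j ∈ s, y j ≠ 0 → a ≤ c j) (g : J → R) :
    ∑ j ∈ s with c j < a, g j * y j = 0 := by
  refine Finset.sum_eq_zero fun j hj => ?_
  obtain ⟨hjs, hlt⟩ := Finset.mem_filter.mp hj
  have hy : y j = 0 := of_not_not fun hne => (hmin j hjs hne).not_gt hlt
  rw [hy, mul_zero]

theorem sub_sum_filter_lt_le_of_monotone [Ring R] [PartialOrder R] [IsOrderedRing R]
    {f : α → R} (hf : Monotone f) (hy : ∀ j ∈ s, 0 ≤ y j) {j₀ : J} (hj₀ : j₀ ∈ s)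
    (hone : 1 ≤ y j₀) (a : α) :
    f a - ∑ j ∈ s with c j < a, (f a - f (c j)) * y j ≤ f (c j₀) := by
  have hnonneg : ∀ j ∈ s.filter (c · < a), 0 ≤ (f a - f (c j)) * y j := fun j hj =>
    have ⟨hjs, hlt⟩ := Finset.mem_filter.mp hj
    mul_nonneg (sub_nonneg.mpr (hf hlt.le)) (hy j hjs)
  rcases lt_or_ge (c j₀) a with hlt | hge
  · rw [sub_le_comm]
    calc f a - f (c j₀)
        ≤ (f a - f (c j₀)) * y j₀ := le_mul_of_one_le_right (sub_nonneg.mpr (hf hlt.le)) hone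
      _ ≤ ∑ j ∈ s with c j < a, (f a - f (c j)) * y j :=
          Finset.single_le_sum hnonneg (Finset.mem_filter.mpr ⟨hj₀, hlt⟩)
  · exact (sub_le_self _ (Finset.sum_nonneg hnonneg)).trans (hf hge)

end WeightedSums

section OpenFacilities

variable {J R : Type*} [Fintype J]

/-- The facilities opened by the decision vector `y`, encoded as the support of `y` so that the
notion also makes sense when `y` is not binary. -/
noncomputable def openFacilities [Zero R] (y : J → R) : Finset J :=
  {j | y j ≠ 0}

@[simp]
theorem mem_openFacilities [Zero R] {y : J → R} {j : J} : j ∈ openFacilities y ↔ y j ≠ 0 := by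
  simp [openFacilities]

theorem sum_eq_card_openFacilities [NonAssocSemiring R] {y : J → R}
    (hy : ∀ j, y j = 0 ∨ y j = 1) : ∑ j, y j = (openFacilities y).card := by
  have hindicator : ∀ j, y j = if y j ≠ 0 then 1 else 0 := fun j => by
    split_ifs with hne
    · exact (hy j).resolve_left hne
    · exact of_not_not hne
  rw [Finset.sum_congr rfl fun j _ => hindicator j, Finset.sum_boole, openFacilities]

theorem exists_mem_openFacilities_le [Ring R] [LinearOrder R] {c y : J → R} {z : R}
    (hopen : (openFacilities y).Nonempty)
    (hz : ∀ j, c j - ∑ j' with c j' < c j, (c j - c j') * y j' ≤ z) :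
    ∃ j ∈ openFacilities y, c j ≤ z := by
  obtain ⟨j₀, hj₀, hnearest⟩ := (openFacilities y).exists_min_image c hopen
  refine ⟨j₀, hj₀, ?_⟩
  simpa only [sum_filter_lt_mul_eq_zero fun j _ hj => hnearest j (mem_openFacilities.mpr hj),
    sub_zero] using hz j₀

end OpenFacilities

section CoveringRadius

variable {I J : Type} [Fintype I] [Fintype J] [Nonempty I]

theorem covRad_le_iff {d : I → J → ℝ} {S : Finset J} (hS : S.Nonempty) {r : ℝ} :
    covRad d S ≤ r ↔ ∀ i, ∃ j ∈ S, d i j ≤ r := by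
  simp [covRad, hS]

theorem pCenterOpt_le_covRad (d : I → J → ℝ) {S : Finset J} {p : ℕ} (hS : S.card = p) :
    pCenterOpt d p ≤ covRad d S := by
  refine csInf_le (Set.Finite.bddBelow ?_) ⟨S, hS, rfl⟩
  refine (Set.finite_range (covRad d)).subset ?_
  rintro _ ⟨T, -, rfl⟩
  exact Set.mem_range_self T

end CoveringRadius

theorem nPCR1_lifted_optimality_general
    {I J : Type} [Fintype I] [Fintype J] [Nonempty I]
    (d : I → J → ℝ) (y : J → ℝ) (hy : ∀ j, y j = 0 ∨ 1 ≤ y j)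
    (hopen : (openFacilities y).Nonempty)
    (z : ℝ)
    (hz : ∀ i j, z ≥ d i j - ∑ j' with d i j' < d i j, (d i j - d i j') * y j')
    (LB : ℝ) (hLB : LB ≤ covRad d (openFacilities y)) :
    ∀ i j, z ≥ max LB (d i j) -
        ∑ j' with d i j' < d i j, (max LB (d i j) - max LB (d i j')) * y j' := by
  have hserved : ∀ i, ∃ j ∈ openFacilities y, d i j ≤ z := fun i =>
    exists_mem_openFacilities_le hopen (hz i)
  have hLBz : LB ≤ z := hLB.trans ((covRad_le_iff hopen).mpr hserved)
  have hnonneg : ∀ j, 0 ≤ y j := fun j => (hy j).elim Eq.ge zero_le_one.trans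
  intro i j
  obtain ⟨j₀, hj₀, hle⟩ := hserved i
  have hone : 1 ≤ y j₀ := (hy j₀).resolve_left (mem_openFacilities.mp hj₀)
  calc max LB (d i j) - ∑ j' with d i j' < d i j, (max LB (d i j) - max LB (d i j')) * y j'
      ≤ max LB (d i j₀) :=
        sub_sum_filter_lt_le_of_monotone (monotone_const.max monotone_id)
          (fun j _ => hnonneg j) (Finset.mem_univ j₀) hone (d i j)
    _ ≤ z := max_le hLBz hle

/-- Lifted optimality inequality for formulation (nPCR1), where the lower bound `LB`
is a lower bound on the p-center optimal value for the period's facility count. -/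
theorem nPCR1_lifted_optimality
    {I J : Type} [Fintype I] [Fintype J] [Nonempty I] [Nonempty J]
    (d : I → J → ℝ) (hd : ∀ i j, 0 ≤ d i j)
    (ph : ℕ) (hph1 : 1 ≤ ph) (hphcard : ph ≤ Fintype.card J)
    (y : J → ℝ) (hy01 : ∀ j, y j = 0 ∨ y j = 1)
    (hcard : ∑ j, y j = (ph : ℝ))
    (z : ℝ)
    (hz : ∀ i j, z ≥ d i j -
        ∑ j' ∈ Finset.univ.filter (fun j' => d i j' < d i j), (d i j - d i j') * y j')
    (LB : ℝ) (hLB0 : 0 ≤ LB) (hLBopt : LB ≤ pCenterOpt d ph) :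
    ∀ i j, z ≥ max LB (d i j) -
        ∑ j' ∈ Finset.univ.filter (fun j' => d i j' < d i j),
          (max LB (d i j) - max LB (d i j')) * y j' := by
  have hcard_open : (openFacilities y).card = ph := by
    exact_mod_cast (sum_eq_card_openFacilities hy01).symm.trans hcard
  exact nPCR1_lifted_optimality_general d y (fun j => (hy01 j).imp_right Eq.ge)
    (Finset.card_pos.mp (hcard_open ▸ hph1)) z hz LB
    (hLBopt.trans (pCenterOpt_le_covRad d hcard_open))
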